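/- If κ is unfoldable, θ < κ, and R(κ) ⊨ 'θ is unfoldable' (that is, θ is inaccessible and for every S ⊆ R(θ) and every α < κ there is a well-founded model of rank < κ that is an end elementary extension of (R(θ),∈,S) of ordinal height ≥ α), then θ is unfoldable in V. -/

import Mathlib

open FirstOrder Cardinal

/-- The language of set theory with one binary relation symbol (membership)
and one unary predicate symbol (for a distinguished subset). -/
def LSP : FirstOrder.Language where
  Functions := fun _ => Empty
  Relations := fun n =>
    match n with
    | 1 => Unit
    | 2 => Unit
    | _ => Empty

/-- A model of the language of set theory: a carrier together with a
membership relation and the interpretation of the distinguished predicate. -/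
structure SetModel : Type 2 where
  Carrier : Type 1
  mem : Carrier → Carrier → Prop
  pred : Carrier → Prop

/-- The first-order `LSP`-structure attached to a `SetModel`. -/
def SetModel.str (M : SetModel) : LSP.Structure M.Carrier where
  funMap := fun {_} f _ => Empty.elim f
  RelMap := fun {n} =>
    match n with
    | 1 => fun _ v => M.pred (v 0)
    | 2 => fun _ v => M.mem (v 0) (v 1)
    | 0 => fun r _ => Empty.elim r
    | (_ + 3) => fun r _ => Empty.elim r

/-- Satisfaction of a first-order formula with `n` free variables in a `SetModel`. -/
def SetModel.Realize (M : SetModel) {n : ℕ} (φ : LSP.Formula (Fin n))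
    (v : Fin n → M.Carrier) : Prop :=
  letI := M.str
  φ.Realize v

/-- `f : M → N` is an elementary map. -/
def IsElem (M N : SetModel) (f : M.Carrier → N.Carrier) : Prop :=
  ∀ (n : ℕ) (φ : LSP.Formula (Fin n)) (v : Fin n → M.Carrier),
    N.Realize φ (f ∘ v) ↔ M.Realize φ v

/-- `f : M → N` realizes `N` as a (proper) end elementary extension of `M`:
it is elementary, no element of `M` gains new members in `N`, and `N` properly
extends the image of `M`. -/
structure IsEEE (M N : SetModel) (f : M.Carrier → N.Carrier) : Prop where
  elementary : IsElem M N f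
  isEnd : ∀ (a : M.Carrier) (b : N.Carrier), N.mem b (f a) → ∃ b', f b' = b
  proper : ¬ Function.Surjective f

/-- `N` is a (proper) end elementary extension of `M`. -/
def EEE (M N : SetModel) : Prop := ∃ f, IsEEE M N f

/-- Isomorphism of set models. -/
def SMIso (M N : SetModel) : Prop :=
  ∃ e : M.Carrier ≃ N.Carrier,
    (∀ x y, M.mem x y ↔ N.mem (e x) (e y)) ∧ ∀ x, M.pred x ↔ N.pred (e x)

/-- The model `(A, ∈, S)` where `A, S` are collections of ZFC sets and `∈` is
genuine membership. -/
def ZModel (A S : Set ZFSet) : SetModel :=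
  ⟨A, fun x y => (x : ZFSet) ∈ (y : ZFSet), fun x => (x : ZFSet) ∈ S⟩

/-- `(A,∈,SA) ≺ₑ (B,∈,SB)`: the inclusion map is a proper end elementary
extension of concrete (well-founded) models. -/
def ZEEE (A SA B SB : Set ZFSet) : Prop :=
  ∃ h : A ⊆ B, IsEEE (ZModel A SA) (ZModel B SB) (Set.inclusion h)

/-- `R(o) = V_o`: the collection of ZFC sets of rank `< o`. -/
def Vrank (o : Ordinal.{0}) : Set ZFSet := {x | x.rank < o}

/-- `κ` is unfoldable: `κ` is inaccessible and for every `S ⊆ R(κ)` and every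
ordinal `α`, `(R(κ),∈,S)` has a well-founded (transitive) proper end elementary
extension of ordinal height at least `α`. -/
def IsUnfoldable (κ : Cardinal.{0}) : Prop :=
  κ.IsInaccessible ∧
    ∀ S : Set ZFSet, S ⊆ Vrank κ.ord → ∀ α : Ordinal.{0},
      ∃ (N : ZFSet) (T : Set ZFSet),
        N.IsTransitive ∧ ZEEE (Vrank κ.ord) S N.toSet T ∧ α ≤ N.rank

/-!
Let `κ` be unfoldable and suppose `(A, ∈, S)` has transitive end elementary extensions `N x ∈ R(κ)`
with `rank (N x) ≥ rank x`, one for each `x ∈ R(κ)`. Code the whole family into a single predicate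
`P ⊆ R(κ)` and take a tall end elementary extension `(N', ∈, P')` of `(R(κ), ∈, P)`. By elementarity
`P'` codes a family indexed by the elements of `N'`, each member of which is still an elementary
extension of `(A, ∈, S)`, satisfaction in a coded structure being first-order by relativization.
To see that the member at a high-ranked `x ∈ N'` is itself tall, `P` also codes the comparison of
ranks: its first-order properties transfer, and in a transitive model they force a genuine
inequality of ranks.
-/

open FirstOrder.Language Sum

instance SetModel.instStructure (M : SetModel) : LSP.Structure M.Carrier :=
  M.str

/-! ### Uniform definability -/

/-- A family of relations, one on each set model, defined by one and the same first-order formula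
in the variables `α`. -/
def UniformlyDefinable {α : Type} (Φ : ∀ M : SetModel, (α → M.Carrier) → Prop) : Prop :=
  ∃ φ : LSP.Formula α, ∀ (M : SetModel) (v : α → M.Carrier), φ.Realize v ↔ Φ M v

namespace UniformlyDefinable

variable {α β : Type} {Φ Ψ : ∀ M : SetModel, (α → M.Carrier) → Prop}

theorem congr (h : UniformlyDefinable Φ) (e : ∀ M v, Φ M v ↔ Ψ M v) : UniformlyDefinable Ψ :=
  h.imp fun _ hφ M v => (hφ M v).trans (e M v)

theorem false : UniformlyDefinable fun _ (_ : α → _) => False :=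
  ⟨⊥, fun _ _ => Iff.rfl⟩

theorem imp : UniformlyDefinable Φ → UniformlyDefinable Ψ →
    UniformlyDefinable fun M v => Φ M v → Ψ M v
  | ⟨φ, hφ⟩, ⟨ψ, hψ⟩ => ⟨φ.imp ψ, fun M v => imp_congr (hφ M v) (hψ M v)⟩

theorem not (h : UniformlyDefinable Φ) : UniformlyDefinable fun M v => ¬ Φ M v :=
  h.imp false

theorem and (h : UniformlyDefinable Φ) (h' : UniformlyDefinable Ψ) :
    UniformlyDefinable fun M v => Φ M v ∧ Ψ M v :=
  (h.imp h'.not).not.congr fun _ _ => by tauto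

theorem or (h : UniformlyDefinable Φ) (h' : UniformlyDefinable Ψ) :
    UniformlyDefinable fun M v => Φ M v ∨ Ψ M v :=
  (h.not.imp h').congr fun _ _ => or_iff_not_imp_left.symm

theorem iff (h : UniformlyDefinable Φ) (h' : UniformlyDefinable Ψ) :
    UniformlyDefinable fun M v => Φ M v ↔ Ψ M v :=
  ((h.imp h').and (h'.imp h)).congr fun _ _ => iff_iff_implies_and_implies.symm

theorem relabel (h : UniformlyDefinable Φ) (g : α → β) :
    UniformlyDefinable fun M v => Φ M fun i => v (g i) := by
  obtain ⟨φ, hφ⟩ := h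
  exact ⟨φ.relabel g, fun M v => Formula.realize_relabel.trans (hφ M _)⟩

theorem all {Φ : ∀ M : SetModel, (α → M.Carrier) → M.Carrier → Prop}
    (h : UniformlyDefinable (α := α ⊕ Unit) fun M w => Φ M (fun i => w (inl i)) (w (inr ()))) :
    UniformlyDefinable fun M v => ∀ x, Φ M v x := by
  obtain ⟨φ, hφ⟩ := h
  refine ⟨φ.iAlls Unit, fun M v => ?_⟩
  simp only [Formula.realize_iAlls, hφ, elim_inl, elim_inr]
  exact ⟨fun h x => h fun _ => x, fun h i => h (i ())⟩

theorem ex {Φ : ∀ M : SetModel, (α → M.Carrier) → M.Carrier → Prop}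
    (h : UniformlyDefinable (α := α ⊕ Unit) fun M w => Φ M (fun i => w (inl i)) (w (inr ()))) :
    UniformlyDefinable fun M v => ∃ x, Φ M v x :=
  (all (Φ := fun M v x => ¬ Φ M v x) h.not).not.congr fun _ _ => not_forall_not

theorem eq (i j : α) : UniformlyDefinable fun _ v => v i = v j :=
  ⟨(Term.var i).equal (Term.var j), fun _ _ => Formula.realize_equal⟩

theorem mem (i j : α) : UniformlyDefinable fun M v => M.mem (v i) (v j) :=
  ⟨Relations.formula₂ (L := LSP) (show LSP.Relations 2 from ()) (Term.var i) (Term.var j),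
    fun _ _ => Formula.realize_rel₂⟩

theorem pred (i : α) : UniformlyDefinable fun M v => M.pred (v i) :=
  ⟨Relations.formula₁ (L := LSP) (show LSP.Relations 1 from ()) (Term.var i),
    fun _ _ => Formula.realize_rel₁⟩

theorem map_iff (h : UniformlyDefinable Φ) {M N : SetModel} {f : M.Carrier → N.Carrier}
    (hf : IsElem M N f) (v : α → M.Carrier) : Φ N (fun i => f (v i)) ↔ Φ M v := by
  obtain ⟨φ, hφ⟩ := h
  let F : M.Carrier ↪ₑ[LSP] N.Carrier := ⟨f, hf⟩
  exact (hφ N _).symm.trans ((F.map_formula φ v).trans (hφ M v))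

end UniformlyDefinable

/-! ### Relativization -/

/-- Satisfaction in `M` relativized to the submodel with universe `D` and distinguished predicate
`B`: quantifiers range over `D`, and the predicate symbol is read as `B`. -/
def SetModel.RealizeOn (M : SetModel) (D B : M.Carrier → Prop) {γ : Type} :
    ∀ {n : ℕ}, LSP.BoundedFormula γ n → (γ → M.Carrier) → (Fin n → M.Carrier) → Prop
  | _, .falsum, _, _ => False
  | _, .equal s t, v, xs => s.realize (Sum.elim v xs) = t.realize (Sum.elim v xs)
  | _, .rel R ts, v, xs =>
    (SetModel.mk M.Carrier M.mem B).str.RelMap R fun i => (ts i).realize (Sum.elim v xs)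
  | _, .imp φ ψ, v, xs => M.RealizeOn D B φ v xs → M.RealizeOn D B ψ v xs
  | _, .all φ, v, xs => ∀ x, D x → M.RealizeOn D B φ v (Fin.snoc xs x)

theorem LSP.exists_eq_var {α : Type} : ∀ t : LSP.Term α, ∃ i, t = Term.var i
  | .var i => ⟨i, rfl⟩
  | .func f _ => Empty.elim f

theorem UniformlyDefinable.realizeOn {α γ : Type} {n : ℕ}
    {D B : ∀ M : SetModel, (α → M.Carrier) → M.Carrier → Prop}
    (hD : UniformlyDefinable (α := α ⊕ Unit) fun M w => D M (fun i => w (inl i)) (w (inr ())))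
    (hB : UniformlyDefinable (α := α ⊕ Unit) fun M w => B M (fun i => w (inl i)) (w (inr ())))
    (φ : LSP.BoundedFormula γ n) (v : γ → α) (xs : Fin n → α) :
    UniformlyDefinable fun M w => M.RealizeOn (D M w) (B M w) φ (w ∘ v) (w ∘ xs) := by
  induction φ generalizing α with
  | falsum => exact .false
  | equal s t =>
    obtain ⟨i, rfl⟩ := LSP.exists_eq_var s
    obtain ⟨j, rfl⟩ := LSP.exists_eq_var t
    exact (UniformlyDefinable.eq (Sum.elim v xs i) (Sum.elim v xs j)).congr fun M w => by
      simp only [SetModel.RealizeOn, Term.realize_var, ← Sum.comp_elim, Function.comp_apply]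
  | @rel _ l R ts =>
    choose i hi using fun k => LSP.exists_eq_var (ts k)
    simp only [SetModel.RealizeOn, hi, Term.realize_var, ← Sum.comp_elim, Function.comp_apply]
    match l, R with
    | 1, _ => exact hB.relabel (Sum.elim id fun _ => Sum.elim v xs (i 0))
    | 2, _ => exact .mem _ _
    | 0, R | _ + 3, R => exact Empty.elim R
  | imp _ _ ihφ ihψ => exact (ihφ hD hB v xs).imp (ihψ hD hB v xs)
  | all φ ih =>
    refine .all (hD.imp ?_)
    refine (ih (D := fun M w => D M fun i => w (inl i)) (B := fun M w => B M fun i => w (inl i))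
      (hD.relabel (Sum.map inl id)) (hB.relabel (Sum.map inl id))
      (inl ∘ v) (Fin.snoc (inl ∘ xs) (inr ()))).congr fun M w => ?_
    rw [Fin.comp_snoc]
    rfl

theorem SetModel.realizeOn_comp_iff {K M : SetModel} {ι : K.Carrier → M.Carrier}
    (hι : Function.Injective ι) {D B : M.Carrier → Prop} (hD : ∀ y, D y ↔ y ∈ Set.range ι)
    (hmem : ∀ a b, M.mem (ι a) (ι b) ↔ K.mem a b) (hpred : ∀ a, B (ι a) ↔ K.pred a)
    {γ : Type} {n : ℕ} (φ : LSP.BoundedFormula γ n) (v : γ → K.Carrier) (xs : Fin n → K.Carrier) :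
    M.RealizeOn D B φ (ι ∘ v) (ι ∘ xs) ↔ φ.Realize v xs := by
  induction φ with
  | falsum => rfl
  | equal s t =>
    obtain ⟨i, rfl⟩ := LSP.exists_eq_var s
    obtain ⟨j, rfl⟩ := LSP.exists_eq_var t
    simp only [SetModel.RealizeOn, Term.realize_var, ← Sum.comp_elim, Function.comp_apply]
    exact hι.eq_iff
  | @rel _ l R ts =>
    choose i hi using fun k => LSP.exists_eq_var (ts k)
    simp only [SetModel.RealizeOn, BoundedFormula.Realize, hi, Term.realize_var, ← Sum.comp_elim,
      Function.comp_apply]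
    match l, R with
    | 1, _ => exact hpred _
    | 2, _ => exact hmem _ _
    | 0, R | _ + 3, R => exact Empty.elim R
  | imp _ _ ihφ ihψ => exact imp_congr (ihφ xs) (ihψ xs)
  | all φ ih =>
    simp only [SetModel.RealizeOn, hD, Set.forall_mem_range, ← Fin.comp_snoc,
      BoundedFormula.realize_all]
    exact forall_congr' fun a => ih _

theorem SetModel.realizeOn_formula_comp_iff {K M : SetModel} {ι : K.Carrier → M.Carrier}
    (hι : Function.Injective ι) {D B : M.Carrier → Prop} (hD : ∀ y, D y ↔ y ∈ Set.range ι)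
    (hmem : ∀ a b, M.mem (ι a) (ι b) ↔ K.mem a b) (hpred : ∀ a, B (ι a) ↔ K.pred a)
    {n : ℕ} (φ : LSP.Formula (Fin n)) (v : Fin n → K.Carrier) :
    M.RealizeOn D B φ (ι ∘ v) default ↔ K.Realize φ v := by
  rw [← Unique.eq_default (ι ∘ default)]
  exact realizeOn_comp_iff hι hD hmem hpred φ v default

/-- `g` is an elementary map from `K` to the submodel of `M` with universe `D` and distinguished
predicate `B`, satisfaction in the latter being expressed inside `M`. -/
structure IsElemOn (K M : SetModel) (D B : M.Carrier → Prop) (g : K.Carrier → M.Carrier) :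
    Prop where
  map_mem : ∀ a, D (g a)
  realizeOn_iff : ∀ {n : ℕ} (φ : LSP.Formula (Fin n)) (v : Fin n → K.Carrier),
    M.RealizeOn D B φ (g ∘ v) default ↔ K.Realize φ v

theorem isElemOn_inclusion_iff {A E B S T P : Set ZFSet} (hAB : A ⊆ B) (hEB : E ⊆ B)
    {D Q : B → Prop} (hD : ∀ y, D y ↔ (y : ZFSet) ∈ E)
    (hQ : ∀ y : B, (y : ZFSet) ∈ E → (Q y ↔ (y : ZFSet) ∈ T)) :
    IsElemOn (ZModel A S) (ZModel B P) D Q (Set.inclusion hAB) ↔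
      ∃ hAE : A ⊆ E, IsElem (ZModel A S) (ZModel E T) (Set.inclusion hAE) := by
  have mem_range_inclusion (y : B) : (y : ZFSet) ∈ E ↔ y ∈ Set.range (Set.inclusion hEB) := by
    rw [Set.range_inclusion]
    rfl
  have realizeOn_iff (hAE : A ⊆ E) {n : ℕ} (φ : LSP.Formula (Fin n)) (v : Fin n → A) :
      (ZModel B P).RealizeOn D Q φ (Set.inclusion hAB ∘ v) default ↔
        (ZModel E T).Realize φ (Set.inclusion hAE ∘ v) :=
    SetModel.realizeOn_formula_comp_iff (K := ZModel E T) (M := ZModel B P)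
      (Set.inclusion_injective hEB) (fun y => (hD y).trans (mem_range_inclusion y))
      (fun _ _ => Iff.rfl) (fun a => hQ _ a.2) φ (Set.inclusion hAE ∘ v)
  constructor
  · intro h
    have hAE : A ⊆ E := fun a ha => (hD _).1 (h.map_mem ⟨a, ha⟩)
    exact ⟨hAE, fun n φ v => (realizeOn_iff hAE φ v).symm.trans (h.realizeOn_iff φ v)⟩
  · rintro ⟨hAE, h⟩
    exact ⟨fun a => (hD _).2 (hAE a.2), fun φ v => (realizeOn_iff hAE φ v).trans (h _ φ v)⟩

/-! ### Relations coded by the distinguished predicate -/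

namespace SetModel

variable (M : SetModel)

/-- `z` is the unordered pair `{x, y}` in the sense of `M`. -/
def IsUnorderedPair (z x y : M.Carrier) : Prop :=
  ∀ w, M.mem w z ↔ w = x ∨ w = y

/-- `p` is the Kuratowski ordered pair `(x, y)` in the sense of `M`. -/
def IsPair (p x y : M.Carrier) : Prop :=
  ∀ z, M.mem z p ↔ M.IsUnorderedPair z x x ∨ M.IsUnorderedPair z x y

/-- The binary relation with name `t` coded by the distinguished predicate of `M`: it relates `x`
to `y` when the predicate holds of the triple `((t, x), y)`. -/
def Coded (t x y : M.Carrier) : Prop :=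
  ∃ p q, M.IsPair p t x ∧ M.IsPair q p y ∧ M.pred q

end SetModel

namespace UniformlyDefinable

variable {α : Type} (i j k : α)

theorem isUnorderedPair : UniformlyDefinable fun M v => M.IsUnorderedPair (v i) (v j) (v k) :=
  .all ((mem _ _).iff ((eq _ _).or (eq _ _)))

theorem isPair : UniformlyDefinable fun M v => M.IsPair (v i) (v j) (v k) :=
  .all ((mem _ _).iff ((isUnorderedPair _ _ _).or (isUnorderedPair _ _ _)))

theorem coded : UniformlyDefinable fun M v => M.Coded (v i) (v j) (v k) :=
  .ex (.ex ((isPair _ _ _).and ((isPair _ _ _).and (pred _))))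

end UniformlyDefinable

theorem IsElemOn.coded_comp {K M N : SetModel} {f : M.Carrier → N.Carrier}
    (hf : IsElem M N f) {d p : M.Carrier} {g : K.Carrier → M.Carrier}
    (h : ∀ x, IsElemOn K M (M.Coded d x) (M.Coded p x) g) (y : N.Carrier) :
    IsElemOn K N (N.Coded (f d) y) (N.Coded (f p) y) (f ∘ g) where
  map_mem a :=
    have definable : UniformlyDefinable fun M (v : Fin 2 → M.Carrier) =>
        ∀ x, M.Coded (v 0) x (v 1) :=
      .all (.coded _ _ _)
    (definable.map_iff hf ![d, g a]).2 (fun x => (h x).map_mem a) y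
  realizeOn_iff {n} φ v := by
    let Sat (M : SetModel) (w : Fin 2 ⊕ Fin n → M.Carrier) (x : M.Carrier) : Prop :=
      M.RealizeOn (M.Coded (w (inl 0)) x) (M.Coded (w (inl 1)) x) φ (fun i => w (inr i)) default
    have definable : UniformlyDefinable (α := (Fin 2 ⊕ Fin n) ⊕ Unit) fun M w =>
        Sat M (fun i => w (inl i)) (w (inr ())) :=
      (UniformlyDefinable.realizeOn
        (D := fun M w => M.Coded (w (inl (inl 0))) (w (inr ())))
        (B := fun M w => M.Coded (w (inl (inl 1))) (w (inr ())))
        (.coded _ _ _) (.coded _ _ _) φ (fun i => inl (inr i)) default).congr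
        fun M w => by rw [Unique.eq_default (w ∘ default)]; rfl
    let w : Fin 2 ⊕ Fin n → M.Carrier := Sum.elim ![d, p] (g ∘ v)
    by_cases hv : K.Realize φ v
    · have sat : ∀ x, Sat M w x := fun x => ((h x).realizeOn_iff φ v).2 hv
      exact iff_of_true ((definable.all.map_iff hf w).2 sat y) hv
    · have not_sat : ∀ x, ¬ Sat M w x := fun x => mt ((h x).realizeOn_iff φ v).1 hv
      have definable_not : UniformlyDefinable fun M w => ∀ x, ¬ Sat M w x := .all definable.not
      exact iff_of_false ((definable_not.map_iff hf w).2 not_sat y) hv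

/-- A collection of sets is transitive when it contains the members of its elements; this is
`ZFSet.IsTransitive` for collections that need not be sets. -/
def IsTransitiveCollection (A : Set ZFSet) : Prop :=
  ∀ y ∈ A, ∀ z ∈ y, z ∈ A

theorem SetModel.isUnorderedPair_zmodel_iff {A S : Set ZFSet} (hA : IsTransitiveCollection A)
    (z x y : A) :
    (ZModel A S).IsUnorderedPair z x y ↔ (z : ZFSet) = {(x : ZFSet), (y : ZFSet)} := by
  rw [ZFSet.ext_iff]
  simp only [ZFSet.mem_pair]
  constructor
  · refine fun h w => ⟨fun hw => ?_, ?_⟩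
    · exact ((h ⟨w, hA z z.2 w hw⟩).1 hw).imp (congrArg Subtype.val) (congrArg Subtype.val)
    · rintro (rfl | rfl)
      exacts [(h x).2 (Or.inl rfl), (h y).2 (Or.inr rfl)]
  · exact fun h (w : A) => (h w).trans (or_congr Subtype.ext_iff.symm Subtype.ext_iff.symm)

/-- A collection of sets that is transitive and closed under unordered pairs; on such collections
the Kuratowski pair is absolute. -/
structure IsPairClosed (A : Set ZFSet) : Prop where
  isTransitive : IsTransitiveCollection A
  unorderedPair_mem : ∀ x ∈ A, ∀ y ∈ A, ({x, y} : ZFSet) ∈ A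

namespace IsPairClosed

variable {A S : Set ZFSet}

theorem pair_mem (hA : IsPairClosed A) {x y : ZFSet} (hx : x ∈ A) (hy : y ∈ A) :
    ZFSet.pair x y ∈ A := by
  rw [ZFSet.pair, ← ZFSet.pair_eq_singleton]
  exact hA.unorderedPair_mem _ (hA.unorderedPair_mem x hx x hx) _ (hA.unorderedPair_mem x hx y hy)

theorem isPair_zmodel_iff (hA : IsPairClosed A) (p x y : A) :
    (ZModel A S).IsPair p x y ↔ (p : ZFSet) = ZFSet.pair x y := by
  have isUnorderedPair_iff (z x y : A) :=
    SetModel.isUnorderedPair_zmodel_iff hA.isTransitive (S := S) z x y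
  rw [ZFSet.pair, ← ZFSet.pair_eq_singleton, ZFSet.ext_iff]
  simp only [ZFSet.mem_pair]
  constructor
  · refine fun h w => ⟨fun hw => ?_, ?_⟩
    · exact ((h ⟨w, hA.isTransitive p p.2 w hw⟩).1 hw).imp
        (isUnorderedPair_iff _ _ _).1 (isUnorderedPair_iff _ _ _).1
    · rintro (rfl | rfl)
      · exact (h ⟨_, hA.unorderedPair_mem x x.2 x x.2⟩).2
          (Or.inl ((isUnorderedPair_iff _ _ _).2 rfl))
      · exact (h ⟨_, hA.unorderedPair_mem x x.2 y y.2⟩).2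
          (Or.inr ((isUnorderedPair_iff _ _ _).2 rfl))
  · exact fun h (w : A) => (h w).trans
      (or_congr (isUnorderedPair_iff _ _ _) (isUnorderedPair_iff _ _ _)).symm

theorem coded_zmodel_iff (hA : IsPairClosed A) (t x y : A) :
    (ZModel A S).Coded t x y ↔ ZFSet.pair (ZFSet.pair t x) y ∈ S := by
  have isPair_iff (p x y : A) := hA.isPair_zmodel_iff (S := S) p x y
  constructor
  · rintro ⟨p, q, hp, hq, hS⟩
    rw [← (isPair_iff p t x).1 hp, ← (isPair_iff q p y).1 hq]
    exact hS
  · intro h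
    have htx := hA.pair_mem t.2 x.2
    exact ⟨⟨_, htx⟩, ⟨_, hA.pair_mem htx y.2⟩, (isPair_iff ⟨_, _⟩ t x).2 rfl,
      (isPair_iff ⟨_, _⟩ ⟨_, htx⟩ y).2 rfl, h⟩

theorem exists_coded_iff (hA : IsPairClosed A) {ι : Type*} {t : ι → A}
    (ht : Function.Injective t) (R : ι → A → A → Prop) :
    ∃ P ⊆ A, ∀ (i : ι) (x y : A), (ZModel A P).Coded (t i) x y ↔ R i x y := by
  refine ⟨{q | ∃ (i : ι) (x y : A), ZFSet.pair (ZFSet.pair (t i) x) y = q ∧ R i x y}, ?_,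
    fun i x y => (hA.coded_zmodel_iff _ _ _).trans ⟨?_, fun h => ⟨i, x, y, rfl, h⟩⟩⟩
  · rintro _ ⟨i, x, y, rfl, -⟩
    exact hA.pair_mem (hA.pair_mem (t i).2 x.2) y.2
  · rintro ⟨j, x', y', h, hR⟩
    simp only [ZFSet.pair_inj, SetCoe.ext_iff, ht.eq_iff] at h
    obtain ⟨⟨rfl, rfl⟩, rfl⟩ := h
    exact hR

end IsPairClosed

theorem isTransitiveCollection_Vrank {o : Ordinal.{0}} : IsTransitiveCollection (Vrank o) :=
  fun _ hy _ hz => (ZFSet.rank_lt_of_mem hz).trans hy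

theorem isPairClosed_Vrank {o : Ordinal.{0}} (ho : Order.IsSuccLimit o) :
    IsPairClosed (Vrank o) where
  isTransitive := isTransitiveCollection_Vrank
  unorderedPair_mem x hx y hy := by
    change ZFSet.rank _ < o
    rw [ZFSet.rank_pair]
    exact max_lt (ho.succ_lt hx) (ho.succ_lt hy)

theorem exists_injective_nat_Vrank {o : Ordinal.{0}} (ho : Order.IsSuccLimit o) :
    ∃ t : ℕ → Vrank o, Function.Injective t := by
  refine ⟨fun n => ⟨(n : Ordinal).toZFSet, ?_⟩, fun m n h => ?_⟩
  · change ZFSet.rank _ < o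
    rw [Ordinal.rank_toZFSet]
    exact ho.natCast_lt n
  · exact_mod_cast Ordinal.toZFSet_injective (congrArg Subtype.val h)

/-! ### Towers of sets -/

/-- In `M` the relation named `d` codes a family of transitive sets, indexed by the elements `x`
of `M`. The relation named `r` compares ranks; only the first-order properties of the comparison
that bound the rank of `x` by that of its set are recorded. -/
structure IsRankedTower (M : SetModel) (d r : M.Carrier) : Prop where
  coded_of_mem : ∀ x y z, M.Coded d x y → M.mem z y → M.Coded d x z
  exists_coded_rank : ∀ x x', M.mem x' x → ∃ y, M.Coded d x y ∧ M.Coded r x' y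
  exists_mem_rank : ∀ x y, M.Coded r x y → ∀ x', M.mem x' x → ∃ y', M.mem y' y ∧ M.Coded r x' y'

theorem UniformlyDefinable.isRankedTower {α : Type} (i j : α) :
    UniformlyDefinable fun M v => IsRankedTower M (v i) (v j) :=
  have coded_of_mem : UniformlyDefinable fun M v =>
      ∀ x y z, M.Coded (v i) x y → M.mem z y → M.Coded (v i) x z :=
    .all (.all (.all ((coded _ _ _).imp ((mem _ _).imp (coded _ _ _)))))
  have exists_coded_rank : UniformlyDefinable fun M v =>
      ∀ x x', M.mem x' x → ∃ y, M.Coded (v i) x y ∧ M.Coded (v j) x' y :=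
    .all (.all ((mem _ _).imp (.ex ((coded _ _ _).and (coded _ _ _)))))
  have exists_mem_rank : UniformlyDefinable fun M v =>
      ∀ x y, M.Coded (v j) x y → ∀ x', M.mem x' x → ∃ y', M.mem y' y ∧ M.Coded (v j) x' y' :=
    .all (.all ((coded _ _ _).imp (.all ((mem _ _).imp (.ex ((mem _ _).and (coded _ _ _)))))))
  (coded_of_mem.and (exists_coded_rank.and exists_mem_rank)).congr fun _ _ =>
    ⟨fun h => ⟨h.1, h.2.1, h.2.2⟩, fun h => ⟨h.1, h.2, h.3⟩⟩

theorem IsRankedTower.map {M N : SetModel} {f : M.Carrier → N.Carrier} (hf : IsElem M N f)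
    {d r : M.Carrier} (h : IsRankedTower M d r) : IsRankedTower N (f d) (f r) :=
  ((UniformlyDefinable.isRankedTower (0 : Fin 2) 1).map_iff hf ![d, r]).2 h

theorem exists_isRankedTower {κ : Ordinal.{0}} (hκ : Order.IsSuccLimit κ) {E : Vrank κ → ZFSet}
    (T : Vrank κ → Set ZFSet) (htrans : ∀ x, (E x).IsTransitive) (hsub : ∀ x, (E x).toSet ⊆ Vrank κ)
    (hrank : ∀ x : Vrank κ, (x : ZFSet).rank ≤ (E x).rank) :
    ∃ P ⊆ Vrank κ, ∃ d p r : Vrank κ, IsRankedTower (ZModel (Vrank κ) P) d r ∧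
      (∀ x y : Vrank κ, (ZModel (Vrank κ) P).Coded d x y ↔ (y : ZFSet) ∈ E x) ∧
      ∀ x y : Vrank κ, (ZModel (Vrank κ) P).Coded p x y ↔ (y : ZFSet) ∈ T x := by
  obtain ⟨t, ht⟩ := exists_injective_nat_Vrank hκ
  obtain ⟨P, hP, hcode⟩ := (isPairClosed_Vrank hκ).exists_coded_iff
    (ht.comp Fin.val_injective) (ι := Fin 3) ![fun x y => (y : ZFSet) ∈ E x,
      fun x y => (y : ZFSet) ∈ T x, fun x y => (x : ZFSet).rank ≤ (y : ZFSet).rank]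
  have coded_d (x y : Vrank κ) : (ZModel (Vrank κ) P).Coded (t 0) x y ↔ (y : ZFSet) ∈ E x :=
    hcode 0 x y
  have coded_r (x y : Vrank κ) :
      (ZModel (Vrank κ) P).Coded (t 2) x y ↔ (x : ZFSet).rank ≤ (y : ZFSet).rank := hcode 2 x y
  refine ⟨P, hP, t 0, t 1, t 2, ⟨?_, ?_, ?_⟩, coded_d, hcode 1⟩
  · intro x y z hy hz
    exact (coded_d x z).2 ((htrans x).mem_trans hz ((coded_d x y).1 hy))
  · intro x x' hx'
    obtain ⟨y, hy, hle⟩ := ZFSet.lt_rank_iff.1 ((ZFSet.rank_lt_of_mem hx').trans_le (hrank x))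
    exact ⟨⟨y, hsub x hy⟩, (coded_d x _).2 hy, (coded_r x' ⟨y, _⟩).2 hle⟩
  · intro x (y : Vrank κ) hxy x' hx'
    obtain ⟨y', hy', hle⟩ :=
      ZFSet.lt_rank_iff.1 ((ZFSet.rank_lt_of_mem hx').trans_le ((coded_r x y).1 hxy))
    exact ⟨⟨y', isTransitiveCollection_Vrank y y.2 y' hy'⟩, hy', (coded_r x' ⟨y', _⟩).2 hle⟩

theorem IsRankedTower.rank_le_of_coded {A P : Set ZFSet} (hA : IsTransitiveCollection A)
    {d r : A} (h : IsRankedTower (ZModel A P) d r) (x : ZFSet) (hx : x ∈ A) (y : A)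
    (hxy : (ZModel A P).Coded r ⟨x, hx⟩ y) : x.rank ≤ (y : ZFSet).rank := by
  induction x using ZFSet.inductionOn generalizing y with
  | _ x ih =>
    rw [ZFSet.rank_le_iff]
    intro x' hx'
    obtain ⟨y', hy', hxy'⟩ := h.exists_mem_rank ⟨x, hx⟩ y hxy ⟨x', hA x hx x' hx'⟩ hx'
    exact (ih x' hx' _ y' hxy').trans_lt (ZFSet.rank_lt_of_mem hy')

/-- The set of all `y ∈ N` to which `x` is related by the relation named `d` in `(N, ∈, P)`. -/
noncomputable def codedSet (N : ZFSet) (P : Set ZFSet) (d x : N.toSet) : ZFSet :=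
  N.sep fun y => ∃ hy : y ∈ N.toSet, (ZModel N.toSet P).Coded d x ⟨y, hy⟩

section codedSet

variable {N : ZFSet} {P : Set ZFSet} {d r x : N.toSet}

theorem coe_mem_codedSet {y : N.toSet} :
    (y : ZFSet) ∈ codedSet N P d x ↔ (ZModel N.toSet P).Coded d x y :=
  ZFSet.mem_sep.trans ⟨fun h => h.2.2, fun h => ⟨y.2, y.2, h⟩⟩

theorem codedSet_subset : (codedSet N P d x).toSet ⊆ N.toSet :=
  fun _ hy => (ZFSet.mem_sep.1 hy).1

theorem IsRankedTower.isTransitive_codedSet (hN : N.IsTransitive)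
    (h : IsRankedTower (ZModel N.toSet P) d r) : (codedSet N P d x).IsTransitive := by
  intro y hy z hz
  have hyN : y ∈ N := codedSet_subset hy
  exact coe_mem_codedSet (y := ⟨z, hN.mem_trans hz hyN⟩).2
    (h.coded_of_mem x ⟨y, hyN⟩ _ (coe_mem_codedSet.1 hy) hz)

theorem IsRankedTower.rank_le_rank_codedSet (hN : N.IsTransitive)
    (h : IsRankedTower (ZModel N.toSet P) d r) :
    (x : ZFSet).rank ≤ (codedSet N P d x).rank := by
  rw [ZFSet.rank_le_iff]
  intro x' hx'
  have hx'N : x' ∈ N := hN.mem_trans hx' x.2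
  obtain ⟨y, hy, hxy⟩ := h.exists_coded_rank x ⟨x', hx'N⟩ hx'
  exact (h.rank_le_of_coded (fun _ hy _ hz => hN.mem_trans hz hy) x' hx'N y hxy).trans_lt
    (ZFSet.rank_lt_of_mem (coe_mem_codedSet.2 hy))

end codedSet

/-! ### Transitive end elementary extensions -/

theorem ZEEE.isTransitiveCollection {A S T : Set ZFSet} {N : ZFSet} (h : ZEEE A S N.toSet T)
    (hN : N.IsTransitive) : IsTransitiveCollection A := by
  intro a ha b hb
  obtain ⟨hAN, hE⟩ := h
  obtain ⟨c, hc⟩ := hE.isEnd ⟨a, ha⟩ ⟨b, hN.mem_trans hb (hAN ha)⟩ hb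
  obtain rfl : c.1 = b := congrArg Subtype.val hc
  exact c.2

theorem ZEEE.of_isElem {A B S T : Set ZFSet} (hA : IsTransitiveCollection A) (hAB : A ⊆ B)
    (hBA : ¬ B ⊆ A) (h : IsElem (ZModel A S) (ZModel B T) (Set.inclusion hAB)) : ZEEE A S B T := by
  refine ⟨hAB, h, fun a b hb => ⟨⟨b.1, hA a.1 a.2 b.1 hb⟩, rfl⟩, fun hsurj => hBA fun b hb => ?_⟩
  obtain ⟨⟨a, ha⟩, hab⟩ := hsurj ⟨b, hb⟩
  obtain rfl : a = b := congrArg Subtype.val hab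
  exact ha

/-! ### Reflection at an unfoldable cardinal -/

theorem exists_elementary_tower {κ : Ordinal.{0}} (hκ : Order.IsSuccLimit κ) {A S : Set ZFSet}
    (h : ∀ α < κ, ∃ (N : ZFSet) (T : Set ZFSet),
      N.IsTransitive ∧ N.rank < κ ∧ ZEEE A S N.toSet T ∧ α ≤ N.rank) :
    ∃ (hA : A ⊆ Vrank κ) (P : Set ZFSet) (d p r : Vrank κ), P ⊆ Vrank κ ∧
      IsRankedTower (ZModel (Vrank κ) P) d r ∧
      ∀ x, IsElemOn (ZModel A S) (ZModel (Vrank κ) P) ((ZModel (Vrank κ) P).Coded d x)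
        ((ZModel (Vrank κ) P).Coded p x) (Set.inclusion hA) := by
  choose E T htrans hlt hE hrank using fun x : Vrank κ => h _ x.2
  have hsub (x : Vrank κ) : (E x).toSet ⊆ Vrank κ := fun y hy =>
    (ZFSet.rank_lt_of_mem hy).trans (hlt x)
  have hA : A ⊆ Vrank κ := by
    obtain ⟨t, -⟩ := exists_injective_nat_Vrank hκ
    exact (hE (t 0)).1.trans (hsub (t 0))
  obtain ⟨P, hP, d, p, r, htower, coded_d, coded_p⟩ :=
    exists_isRankedTower hκ T htrans hsub hrank
  refine ⟨hA, P, d, p, r, hP, htower, fun x => ?_⟩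
  obtain ⟨hAE, hEEE⟩ := hE x
  exact (isElemOn_inclusion_iff hA (hsub x) (coded_d x) fun y _ => coded_p x y).2
    ⟨hAE, hEEE.elementary⟩

theorem unfoldable_in_Rkappa_implies_unfoldable_general {κ : Cardinal.{0}} (hκ : IsUnfoldable κ)
    {A S : Set ZFSet}
    (h : ∀ α < κ.ord, ∃ (N : ZFSet) (T : Set ZFSet),
      N.IsTransitive ∧ N.rank < κ.ord ∧ ZEEE A S N.toSet T ∧ α ≤ N.rank)
    (α : Ordinal.{0}) :
    ∃ (N : ZFSet) (T : Set ZFSet), N.IsTransitive ∧ ZEEE A S N.toSet T ∧ α ≤ N.rank := by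
  have hlim : Order.IsSuccLimit κ.ord := Cardinal.isSuccLimit_ord hκ.1.aleph0_lt.le
  obtain ⟨E, T, hEtrans, hEκ, hE, -⟩ := h 0 hlim.bot_lt
  obtain ⟨hA, P, d, p, r, hP, htower, helem⟩ := exists_elementary_tower hlim h
  obtain ⟨N, P', hN, ⟨hκN, hext⟩, hNrank⟩ := hκ.2 P hP (Order.succ (max α κ.ord))
  obtain ⟨x, hx, hxrank⟩ := ZFSet.lt_rank_iff.1 (Order.succ_le_iff.1 hNrank)
  let d' : N.toSet := Set.inclusion hκN d
  let p' : N.toSet := Set.inclusion hκN p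
  let D : ZFSet := codedSet N P' d' ⟨x, hx⟩
  have htower' : IsRankedTower (ZModel N.toSet P') d' (Set.inclusion hκN r) :=
    htower.map hext.elementary
  have hDrank : max α κ.ord ≤ D.rank := hxrank.trans (htower'.rank_le_rank_codedSet hN)
  obtain ⟨hAD, hAD_elem⟩ : ∃ hAD : A ⊆ D.toSet, IsElem (ZModel A S)
      (ZModel D.toSet (codedSet N P' p' ⟨x, hx⟩).toSet) (Set.inclusion hAD) :=
    (isElemOn_inclusion_iff (hA.trans hκN) codedSet_subset (fun _ => coe_mem_codedSet.symm)
      fun _ _ => coe_mem_codedSet.symm).1 (IsElemOn.coded_comp hext.elementary helem ⟨x, hx⟩)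
  have hDA : ¬ D.toSet ⊆ A := fun hDA =>
    have hDE : D ⊆ E := fun _ hy => hE.1 (hDA hy)
    ((ZFSet.rank_mono hDE).trans_lt hEκ).not_ge ((le_max_right _ _).trans hDrank)
  exact ⟨D, _, htower'.isTransitive_codedSet hN,
    .of_isElem (hE.isTransitiveCollection hEtrans) hAD hDA hAD_elem,
    (le_max_left _ _).trans hDrank⟩

/-- If `κ` is unfoldable, `θ < κ`, and `θ` is unfoldable in
the sense of `R(κ)`, then `θ` is unfoldable in `V`. -/
theorem unfoldable_in_Rkappa_implies_unfoldable
    (κ θ : Cardinal.{0}) (hκ : IsUnfoldable κ) (hlt : θ < κ)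
    (hθinacc : θ.IsInaccessible)
    (hrel : ∀ S : Set ZFSet, S ⊆ Vrank θ.ord → ∀ α : Ordinal.{0}, α < κ.ord →
      ∃ (N : ZFSet) (T : Set ZFSet), N.IsTransitive ∧ N.rank < κ.ord ∧
        ZEEE (Vrank θ.ord) S N.toSet T ∧ α ≤ N.rank) :
    IsUnfoldable θ := by
  exact ⟨hθinacc, fun S hS => unfoldable_in_Rkappa_implies_unfoldable_general hκ (hrel S hS)⟩
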